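/- In the model Y = Xβ* + ξ with p ≥ n and k* ≤ c·n for an absolute constant c, assume that conditionally on ξ the rows X_i^T of X are i.i.d. N(0,Σ). There exist constants c₁, c₂, c₃ > 0 such that if γ > 0 is small enough, then with probability at least 1 − c₁e^{−c₂n}, the minimum ℓ2-norm interpolator β̂ satisfies min( r̄(γ)², c₃‖ξ‖₂²/n ) ≤ ‖Σ^{1/2}(β̂ − β*)‖₂². -/

import Mathlib

open MeasureTheory ProbabilityTheory Matrix Finset
open scoped ENNReal Classical

noncomputable section

/-- Euclidean (`ℓ2`) norm of a finite real vector. -/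
def enorm2 {m : ℕ} (v : Fin m → ℝ) : ℝ := Real.sqrt (∑ i, v i ^ 2)

/-- The prediction (semi-)norm `‖Σ^{1/2} d‖₂ = √(dᵀ Σ d)`. -/
def predNorm {p : ℕ} (Sig : Matrix (Fin p) (Fin p) ℝ) (d : Fin p → ℝ) : ℝ :=
  Real.sqrt (d ⬝ᵥ Sig.mulVec d)

/-- The standard Gaussian measure `N(0, I_p)` on `ℝ^p`. -/
def stdGaussian (p : ℕ) : Measure (Fin p → ℝ) :=
  Measure.pi fun _ : Fin p => gaussianReal 0 1

/-- `Σ^{1/2} = P Λ^{1/2} Pᵀ` built from the eigendecomposition data. -/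
def covHalf (p : ℕ) (lam : ℕ → ℝ) (Porth : Matrix (Fin p) (Fin p) ℝ) :
    Matrix (Fin p) (Fin p) ℝ :=
  Porth * Matrix.diagonal (fun i : Fin p => Real.sqrt (lam ((i : ℕ) + 1))) * Porthᵀ

/-- The Gaussian law `N(0,Σ)` on `ℝ^p`, realized as the pushforward of `N(0,I_p)`
by `g ↦ Σ^{1/2} g`. -/
def mvGaussian (p : ℕ) (lam : ℕ → ℝ) (Porth : Matrix (Fin p) (Fin p) ℝ) :
    Measure (Fin p → ℝ) :=
  Measure.map (fun g => (covHalf p lam Porth).mulVec g) (stdGaussian p)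

/-- `r_k(Σ) = ∑_{i=k}^p λ_i(Σ)` (eigenvalues `1`-indexed). -/
def rsum (p : ℕ) (lam : ℕ → ℝ) (k : ℕ) : ℝ := ∑ i ∈ Finset.Icc k p, lam i

/-- The set `{k ∈ {1,…,p} : r_k(Σ)/λ_k(Σ) ≥ c₀ n}`. -/
def kstarSet (p : ℕ) (lam : ℕ → ℝ) (c0 : ℝ) (n : ℕ) : Set ℕ :=
  {k | 1 ≤ k ∧ k ≤ p ∧ c0 * n ≤ rsum p lam k / lam k}

/-- `k* = inf { k ∈ {1,…,p} : r_k(Σ)/λ_k(Σ) ≥ c₀ n }`. -/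
def kstar (p : ℕ) (lam : ℕ → ℝ) (c0 : ℝ) (n : ℕ) : ℕ := sInf (kstarSet p lam c0 n)

/-- `ρ = ‖β*‖₂ + 4‖ξ‖₂/√(r_{k*}(Σ))`. -/
def rho (p : ℕ) (lam : ℕ → ℝ) (c0 : ℝ) (n : ℕ) (βstar : Fin p → ℝ) (ξnorm : ℝ) : ℝ :=
  enorm2 βstar + 4 * ξnorm / Real.sqrt (rsum p lam (kstar p lam c0 n))

/-- `r*(η) = inf { r > 0 : ∑ᵢ min(λ_i(Σ), r²) ≤ η n r² }`. -/
def rstar (p n : ℕ) (lam : ℕ → ℝ) (η : ℝ) : ℝ :=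
  sInf {r : ℝ | 0 < r ∧ ∑ i : Fin p, min (lam ((i : ℕ) + 1)) (r ^ 2) ≤ η * n * r ^ 2}

/-- `r̄(γ) = sup { r > 0 : ∑ᵢ min(λ_i(Σ)ρ², r²) ≤ γ ‖ξ‖₂² }`. -/
def rbar (p : ℕ) (lam : ℕ → ℝ) (γ ρ ξnorm : ℝ) : ℝ :=
  sSup {r : ℝ | 0 < r ∧ ∑ i : Fin p, min (lam ((i : ℕ) + 1) * ρ ^ 2) (r ^ 2) ≤ γ * ξnorm ^ 2}

/-- `k̄ = inf { k ≥ k* : r_k(Σ) ≤ (γ/2) r_{k*}(Σ) }`, with `k̄ = p+1` if the set is empty. -/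
def kbar (p : ℕ) (lam : ℕ → ℝ) (c0 : ℝ) (n : ℕ) (γ : ℝ) : ℕ :=
  if _h : {k | kstar p lam c0 n ≤ k ∧
      rsum p lam k ≤ γ / 2 * rsum p lam (kstar p lam c0 n)}.Nonempty
  then sInf {k | kstar p lam c0 n ≤ k ∧
      rsum p lam k ≤ γ / 2 * rsum p lam (kstar p lam c0 n)}
  else p + 1

/-- `b` is a minimum `ℓ2`-norm interpolator for the design `M` and responses `Y`. -/
def IsMinInterp {n p : ℕ} (M : Fin n → Fin p → ℝ) (Y : Fin n → ℝ) (b : Fin p → ℝ) : Prop :=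
  (∀ i, ∑ j, M i j * b j = Y i) ∧
    ∀ b' : Fin p → ℝ, (∀ i, ∑ j, M i j * b' j = Y i) → enorm2 b ≤ enorm2 b'

/-!
Write `X = G diag(σ)^{1/2} Qᵀ` with `G` standard Gaussian. The rotated error `e = Qᵀ(β̂ - β*)`
satisfies `G diag(σ)^{1/2} e = ξ`, so for every `τ > 0` a weighted Cauchy–Schwarz inequality gives
`‖ξ‖⁴ ≤ (ξᵀ G diag(min(τ, σ)) Gᵀ ξ) (‖e‖² + ‖Σ^{1/2}(β̂ - β*)‖² / τ)`.
On an event of probability `1 - 6 exp(-n)` the first factor is at most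
`(40 ∑ min(τ, σᵢ) + 96 n τ) ‖ξ‖²` for all `τ` at once: `min(τ, σ)` is `τ` on a head of coordinates
and `σ` on the tail, so only `p + 1` cut-offs have to be controlled, and the Gaussian deviation
spent on the `k`-th of them may grow like `k`, since the head already contributes `k τ` to the sum.
On the same event `X Xᵀ ≥ r_{k*} / 16`, so `ξ` has a preimage under `X` of norm at most
`4 ‖ξ‖ / √r_{k*}`, and minimality of `β̂` yields `‖e‖ ≤ 2ρ`. If
`‖Σ^{1/2}(β̂ - β*)‖²` were below `min(r̄(γ)², c₃ ‖ξ‖² / n)`, then `τ = t / ρ²`, for any `t` between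
the two, would give `‖ξ‖² ≤ (200 γ + 480 c₃) ‖ξ‖² < ‖ξ‖²`.
-/

section WeightedChiSquare

lemma integral_exp_mul_sq_gaussianReal {t : ℝ} (ht : t < 1 / 2) :
    ∫ x, Real.exp (t * x ^ 2) ∂gaussianReal 0 1 = (√(1 - 2 * t))⁻¹ := by
  have hdensity : ∀ x : ℝ, gaussianPDFReal 0 1 x • Real.exp (t * x ^ 2)
      = (√(2 * Real.pi))⁻¹ * Real.exp (-(1 / 2 - t) * x ^ 2) := by
    intro x
    simp only [gaussianPDFReal, smul_eq_mul, NNReal.coe_one, mul_one, sub_zero, mul_assoc,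
      ← Real.exp_add]
    congr 2
    ring
  have := Real.pi_pos
  have h1 : 0 < 1 - 2 * t := by linarith
  rw [integral_gaussianReal_eq_integral_smul one_ne_zero]
  simp_rw [hdensity]
  rw [integral_const_mul, integral_gaussian, ← Real.sqrt_inv, ← Real.sqrt_inv,
    ← Real.sqrt_mul (by positivity), show 1 / 2 - t = (1 - 2 * t) / 2 by ring]
  congr 1
  field_simp

lemma integrable_exp_mul_sq_gaussianReal {t : ℝ} (ht : t < 1 / 2) :
    Integrable (fun x : ℝ => Real.exp (t * x ^ 2)) (gaussianReal 0 1) := by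
  refine .of_integral_ne_zero ?_
  rw [integral_exp_mul_sq_gaussianReal ht]
  exact inv_ne_zero (Real.sqrt_ne_zero'.2 (by linarith))

lemma inv_sqrt_le_exp {x y : ℝ} (hx : 0 < x) (h : 1 ≤ x * Real.exp (2 * y)) :
    (√x)⁻¹ ≤ Real.exp y := by
  rw [inv_le_iff_one_le_mul₀ (Real.sqrt_pos.2 hx)]
  calc 1 ≤ √(x * Real.exp (2 * y)) := Real.one_le_sqrt.2 h
    _ = Real.exp y * √x := by
      rw [Real.sqrt_mul hx.le, two_mul, Real.exp_add, Real.sqrt_mul_self (Real.exp_pos y).le,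
        mul_comm]

lemma inv_sqrt_one_sub_le_exp {t : ℝ} (h0 : 0 ≤ t) (ht : t ≤ 1 / 4) :
    (√(1 - 2 * t))⁻¹ ≤ Real.exp (2 * t) := by
  refine inv_sqrt_le_exp (by linarith) ?_
  nlinarith [Real.add_one_le_exp (2 * (2 * t))]

lemma inv_sqrt_one_add_le_exp {t : ℝ} (h0 : 0 ≤ t) (ht : t ≤ 1 / 8) :
    (√(1 + 2 * t))⁻¹ ≤ Real.exp (-(3 / 4 * t)) := by
  refine inv_sqrt_le_exp (by linarith) ?_
  nlinarith [Real.add_one_le_exp (2 * -(3 / 4 * t))]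

variable {κ : Type*} [Fintype κ] {w : κ → ℝ}

lemma integrable_exp_sum_mul_sq_stdGaussian {s : ℝ} (h : ∀ i, s * w i < 1 / 2) :
    Integrable (fun x : EuclideanSpace ℝ κ => Real.exp (s * ∑ i, w i * x i ^ 2))
      (ProbabilityTheory.stdGaussian (EuclideanSpace ℝ κ)) := by
  rw [← map_pi_eq_stdGaussian, integrable_map_measure (Continuous.aestronglyMeasurable
    (by fun_prop)) (by fun_prop)]
  simpa only [Function.comp_def, ← Real.exp_sum, Finset.mul_sum, mul_assoc] using
    Integrable.fintype_prod fun i => integrable_exp_mul_sq_gaussianReal (h i)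

lemma mgf_sum_mul_sq_stdGaussian {s : ℝ} (h : ∀ i, s * w i < 1 / 2) :
    mgf (fun x : EuclideanSpace ℝ κ => ∑ i, w i * x i ^ 2)
      (ProbabilityTheory.stdGaussian (EuclideanSpace ℝ κ)) s = ∏ i, (√(1 - 2 * (s * w i)))⁻¹ := by
  simp_rw [← integral_exp_mul_sq_gaussianReal (h _)]
  rw [mgf, ← map_pi_eq_stdGaussian, integral_map (by fun_prop)
    (Continuous.aestronglyMeasurable (by fun_prop)),
    ← integral_fintype_prod_eq_prod (fun i x => Real.exp (s * w i * x ^ 2))]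
  simp_rw [← Real.exp_sum, Finset.mul_sum, mul_assoc]

variable (h0 : ∀ i, 0 ≤ w i) {L : ℝ} (hL : 0 < L) (hw : ∀ i, w i ≤ L)
include h0 hL hw

lemma stdGaussian_real_le_sum_mul_sq (T : ℝ) :
    (ProbabilityTheory.stdGaussian (EuclideanSpace ℝ κ)).real
      {x | 2 * ∑ i, w i + 4 * L * T ≤ ∑ i, w i * x i ^ 2} ≤ Real.exp (-T) := by
  have hs : ∀ i, (4 * L)⁻¹ * w i ≤ 1 / 4 := fun i => by
    rw [inv_mul_le_iff₀ (by positivity)]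
    linarith [hw i]
  have hlt : ∀ i, (4 * L)⁻¹ * w i < 1 / 2 := fun i => (hs i).trans_lt (by norm_num)
  calc _ ≤ Real.exp (-(4 * L)⁻¹ * (2 * ∑ i, w i + 4 * L * T))
          * ∏ i, (√(1 - 2 * ((4 * L)⁻¹ * w i)))⁻¹ := by
        rw [← mgf_sum_mul_sq_stdGaussian hlt]
        exact measure_ge_le_exp_mul_mgf _ (by positivity)
          (integrable_exp_sum_mul_sq_stdGaussian hlt)
    _ ≤ Real.exp (-(4 * L)⁻¹ * (2 * ∑ i, w i + 4 * L * T))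
          * ∏ i, Real.exp (2 * ((4 * L)⁻¹ * w i)) := by
        gcongr with i
        exact inv_sqrt_one_sub_le_exp (mul_nonneg (by positivity) (h0 i)) (hs i)
    _ = Real.exp (-T) := by
        rw [← Real.exp_sum, ← Real.exp_add, ← Finset.mul_sum, ← Finset.mul_sum]
        congr 1
        field_simp
        ring

lemma stdGaussian_real_sum_mul_sq_le :
    (ProbabilityTheory.stdGaussian (EuclideanSpace ℝ κ)).real
      {x | ∑ i, w i * x i ^ 2 ≤ (∑ i, w i) / 2} ≤ Real.exp (-((∑ i, w i) / (32 * L))) := by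
  have hs : ∀ i, (8 * L)⁻¹ * w i ≤ 1 / 8 := fun i => by
    rw [inv_mul_le_iff₀ (by positivity)]
    linarith [hw i]
  have hs0 : ∀ i, 0 ≤ (8 * L)⁻¹ * w i := fun i => mul_nonneg (by positivity) (h0 i)
  have hlt : ∀ i, -(8 * L)⁻¹ * w i < 1 / 2 := fun i => by linarith [hs0 i]
  calc _ ≤ Real.exp (- -(8 * L)⁻¹ * ((∑ i, w i) / 2))
          * ∏ i, (√(1 - 2 * (-(8 * L)⁻¹ * w i)))⁻¹ := by
        rw [← mgf_sum_mul_sq_stdGaussian hlt]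
        exact measure_le_le_exp_mul_mgf _ (neg_nonpos.2 (by positivity))
          (integrable_exp_sum_mul_sq_stdGaussian hlt)
    _ ≤ Real.exp (- -(8 * L)⁻¹ * ((∑ i, w i) / 2))
          * ∏ i, Real.exp (-(3 / 4 * ((8 * L)⁻¹ * w i))) := by
        gcongr with i
        simpa only [neg_mul, mul_neg, sub_neg_eq_add] using inv_sqrt_one_add_le_exp (hs0 i) (hs i)
    _ = Real.exp (-((∑ i, w i) / (32 * L))) := by
        rw [← Real.exp_sum, ← Real.exp_add, Finset.sum_neg_distrib, ← Finset.mul_sum,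
          ← Finset.mul_sum]
        congr 1
        field_simp
        ring

end WeightedChiSquare

section GaussianMatrix

variable {ι κ : Type*} [Fintype ι] [Fintype κ]

lemma map_sum_smul_pi_stdGaussian {E : Type*} [NormedAddCommGroup E] [InnerProductSpace ℝ E]
    [FiniteDimensional ℝ E] [MeasurableSpace E] [BorelSpace E] (u : EuclideanSpace ℝ ι) :
    (Measure.pi fun _ : ι => ProbabilityTheory.stdGaussian E).map (fun g => ∑ a, u a • g a)
      = (ProbabilityTheory.stdGaussian E).map (‖u‖ • ·) := by
  have hprob : ∀ a, IsProbabilityMeasure ((ProbabilityTheory.stdGaussian E).map (u a • ·)) :=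
    fun a => Measure.isProbabilityMeasure_map (by fun_prop)
  have hscaled : (Measure.pi fun _ : ι => ProbabilityTheory.stdGaussian E).map
      (fun g a => u a • g a)
      = Measure.pi fun a => (ProbabilityTheory.stdGaussian E).map (u a • ·) :=
    Measure.pi_map_pi fun a => by fun_prop
  calc _ = ((Measure.pi fun _ : ι => ProbabilityTheory.stdGaussian E).map
        (fun g a => u a • g a)).map (fun y => ∑ a, y a) := by
        rw [Measure.map_map (by fun_prop) (by fun_prop), Function.comp_def]
    _ = (ProbabilityTheory.stdGaussian E).map (‖u‖ • ·) := by
        rw [hscaled]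
        refine Measure.ext_of_charFun (funext fun t => ?_)
        simp_rw [charFun_map_sum_pi_eq_prod, Finset.prod_apply, charFun_map_smul,
          charFun_stdGaussian, ← Complex.exp_sum, norm_smul]
        congr 1
        norm_cast
        simp_rw [mul_pow, norm_norm, EuclideanSpace.norm_sq_eq u, Finset.sum_mul,
          ← Finset.sum_div, Finset.sum_neg_distrib]

/-- The law of an `ι × κ` matrix `G` with independent standard Gaussian entries, encoded by its
rows. -/
def stdGaussianMatrix (ι κ : Type*) [Fintype ι] [Fintype κ] :
    Measure (ι → EuclideanSpace ℝ κ) :=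
  Measure.pi fun _ => ProbabilityTheory.stdGaussian (EuclideanSpace ℝ κ)

instance : IsProbabilityMeasure (stdGaussianMatrix ι κ) := by
  unfold stdGaussianMatrix
  infer_instance

/-- The quadratic form `u ↦ uᵀ G diag(w) Gᵀ u` of the weighted Gram matrix of the rows of `G`. -/
def gramForm (w : κ → ℝ) (G : ι → EuclideanSpace ℝ κ) (u : EuclideanSpace ℝ ι) : ℝ :=
  ∑ i, w i * (∑ a, u a • G a) i ^ 2

/-- The linear map `u ↦ diag(w)^{1/2} Gᵀ u`, a square root of `gramForm w G`. -/
def gramRoot (w : κ → ℝ) (G : ι → EuclideanSpace ℝ κ) :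
    EuclideanSpace ℝ ι →L[ℝ] EuclideanSpace ℝ κ :=
  LinearMap.toContinuousLinearMap
    { toFun u := WithLp.toLp 2 fun i => √(w i) * (∑ a, u a • G a) i
      map_add' u v := by
        ext i
        simp [add_mul, Finset.sum_add_distrib, mul_add]
      map_smul' c u := by
        ext i
        simp [Finset.mul_sum, mul_assoc, mul_left_comm] }

lemma gramRoot_apply (w : κ → ℝ) (G : ι → EuclideanSpace ℝ κ) (u : EuclideanSpace ℝ ι) (i : κ) :
    gramRoot w G u i = √(w i) * (∑ a, u a • G a) i :=
  rfl

lemma norm_sq_gramRoot {w : κ → ℝ} (hw : ∀ i, 0 ≤ w i) (G : ι → EuclideanSpace ℝ κ)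
    (u : EuclideanSpace ℝ ι) : ‖gramRoot w G u‖ ^ 2 = gramForm w G u := by
  simp_rw [EuclideanSpace.real_norm_sq_eq, gramRoot_apply, mul_pow, Real.sq_sqrt (hw _), gramForm]

lemma continuous_gramForm (w : κ → ℝ) (u : EuclideanSpace ℝ ι) :
    Continuous fun G : ι → EuclideanSpace ℝ κ => gramForm w G u := by
  unfold gramForm
  fun_prop

lemma map_sum_smul_stdGaussianMatrix {u : EuclideanSpace ℝ ι} (hu : ‖u‖ = 1) :
    (stdGaussianMatrix ι κ).map (fun G => ∑ a, u a • G a)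
      = ProbabilityTheory.stdGaussian (EuclideanSpace ℝ κ) := by
  simp_rw [stdGaussianMatrix, map_sum_smul_pi_stdGaussian, hu, one_smul, Measure.map_id']

variable {w : κ → ℝ} (h0 : ∀ i, 0 ≤ w i) {L : ℝ} (hL : 0 < L) (hw : ∀ i, w i ≤ L)
  {u : EuclideanSpace ℝ ι} (hu : ‖u‖ = 1)
include h0 hL hw hu

lemma stdGaussianMatrix_real_le_gramForm (T : ℝ) :
    (stdGaussianMatrix ι κ).real {G | 2 * ∑ i, w i + 4 * L * T ≤ gramForm w G u}
      ≤ Real.exp (-T) := by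
  refine le_of_eq_of_le ?_ (stdGaussian_real_le_sum_mul_sq h0 hL hw T)
  rw [← map_sum_smul_stdGaussianMatrix hu, map_measureReal_apply (by fun_prop)
    (measurableSet_le measurable_const (Continuous.measurable (by fun_prop)))]
  rfl

lemma stdGaussianMatrix_real_gramForm_le :
    (stdGaussianMatrix ι κ).real {G | gramForm w G u ≤ (∑ i, w i) / 2}
      ≤ Real.exp (-((∑ i, w i) / (32 * L))) := by
  refine le_of_eq_of_le ?_ (stdGaussian_real_sum_mul_sq_le h0 hL hw)
  rw [← map_sum_smul_stdGaussianMatrix hu, map_measureReal_apply (by fun_prop)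
    (measurableSet_le (Continuous.measurable (by fun_prop)) measurable_const)]
  rfl

end GaussianMatrix

section SphereNet

open scoped NNReal

variable {E F : Type*} [NormedAddCommGroup E] [NormedSpace ℝ E] [NormedAddCommGroup F]
  [NormedSpace ℝ F]

lemma card_le_of_isSeparated_of_subset_closedBall [FiniteDimensional ℝ E] {ε : ℝ≥0} (hε : 0 < ε)
    {N : Finset E} (hN : (N : Set E) ⊆ Metric.closedBall 0 1)
    (hsep : Metric.IsSeparated ε (N : Set E)) :
    (#N : ℝ) ≤ (1 + 2 / ε) ^ Module.finrank ℝ E := by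
  borelize E
  let μ : Measure E := Measure.addHaar
  have hε2 : 0 < (ε : ℝ) / 2 := by positivity
  have hdisj : (N : Set E).PairwiseDisjoint fun c => Metric.ball c (ε / 2) :=
    fun c hc d hd hcd => Metric.ball_disjoint_ball (by
      have := (hsep hc hd hcd).le
      rw [edist_nndist, ENNReal.coe_le_coe, ← NNReal.coe_le_coe, coe_nndist] at this
      linarith)
  have hsub : ⋃ c ∈ N, Metric.ball c (ε / 2) ⊆ Metric.ball (0 : E) (1 + ε / 2) :=
    Set.iUnion₂_subset fun _ hc => Metric.ball_subset_ball' (by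
      linarith [Metric.mem_closedBall.1 (hN hc)])
  have hvol : #N * (ENNReal.ofReal ((ε / 2 : ℝ) ^ Module.finrank ℝ E) * μ (Metric.ball 0 1))
      ≤ ENNReal.ofReal ((1 + ε / 2 : ℝ) ^ Module.finrank ℝ E) * μ (Metric.ball 0 1) := by
    rw [← Measure.addHaar_ball_of_pos μ 0 (add_pos one_pos hε2)]
    refine le_of_eq_of_le ?_ (measure_mono (μ := μ) hsub)
    simp_rw [measure_biUnion_finset hdisj fun _ _ => measurableSet_ball,
      Measure.addHaar_ball_of_pos μ _ hε2, Finset.sum_const, nsmul_eq_mul]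
  rw [← mul_assoc, ENNReal.mul_le_mul_iff_left (Metric.measure_ball_pos μ _ one_pos).ne'
    measure_ball_lt_top.ne, ← ENNReal.ofReal_natCast, ← ENNReal.ofReal_mul (by positivity),
    ENNReal.ofReal_le_ofReal_iff (by positivity), ← le_div_iff₀ (by positivity), ← div_pow] at hvol
  rwa [add_div, div_self hε2.ne', one_div_div, add_comm] at hvol

lemma exists_finset_isCover_sphere [FiniteDimensional ℝ E] {ε : ℝ≥0} (hε : 0 < ε) :
    ∃ N : Finset E, (∀ u ∈ N, ‖u‖ = 1) ∧ Metric.IsCover ε (Metric.sphere (0 : E) 1) N ∧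
      (#N : ℝ) ≤ (1 + 2 / ε) ^ Module.finrank ℝ E := by
  have hfin : Metric.packingNumber ε (Metric.sphere (0 : E) 1) ≠ ⊤ := by
    obtain ⟨C, -, hCfin, hC⟩ := Metric.exists_finite_isCover_of_isCompact
      (half_pos hε).ne' (isCompact_sphere (0 : E) 1)
    rw [← mul_div_cancel₀ (b := 2) ε two_ne_zero]
    exact ((Metric.packingNumber_two_mul_le_externalCoveringNumber _ _).trans
      hC.externalCoveringNumber_le_encard).trans_lt hCfin.encard_lt_top |>.ne
  have hNfin : (Metric.maximalSeparatedSet ε (Metric.sphere (0 : E) 1)).Finite :=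
    Set.encard_ne_top_iff.1 (Metric.encard_maximalSeparatedSet hfin ▸ hfin)
  refine ⟨hNfin.toFinset, fun u hu => ?_, ?_, card_le_of_isSeparated_of_subset_closedBall hε ?_ ?_⟩
  · exact mem_sphere_zero_iff_norm.1 (Metric.maximalSeparatedSet_subset (hNfin.mem_toFinset.1 hu))
  · rw [hNfin.coe_toFinset]
    exact Metric.isCover_maximalSeparatedSet hfin
  · rw [hNfin.coe_toFinset]
    exact Metric.maximalSeparatedSet_subset.trans Metric.sphere_subset_closedBall
  · rw [hNfin.coe_toFinset]
    exact Metric.isSeparated_maximalSeparatedSet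

lemma exists_norm_sub_le_of_isCover_sphere {E : Type*} [NormedAddCommGroup E] {ε : ℝ≥0} {N : Set E}
    (hN : Metric.IsCover ε (Metric.sphere 0 1) N) {u : E} (hu : ‖u‖ = 1) :
    ∃ v ∈ N, ‖u - v‖ ≤ ε := by
  obtain ⟨v, hv, huv⟩ := hN (mem_sphere_zero_iff_norm.2 hu)
  refine ⟨v, hv, ?_⟩
  rwa [← dist_eq_norm, ← coe_nndist, NNReal.coe_le_coe, ← ENNReal.coe_le_coe, ← edist_nndist]

variable {N : Set E} {ε : ℝ≥0} (hN : Metric.IsCover ε (Metric.sphere (0 : E) 1) N)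
  {A : E →L[ℝ] F} {B b : ℝ}
include hN

lemma opNorm_le_div_of_isCover_sphere (hε : ε < 1) (hB : 0 ≤ B) (h : ∀ u ∈ N, ‖A u‖ ≤ B) :
    ‖A‖ ≤ B / (1 - ε) := by
  have : (ε : ℝ) < 1 := hε
  suffices ‖A‖ ≤ B + ‖A‖ * ε by
    rw [le_div_iff₀ (by linarith)]
    linarith
  refine A.opNorm_le_of_unit_norm (by positivity) fun u hu => ?_
  obtain ⟨v, hv, huv⟩ := exists_norm_sub_le_of_isCover_sphere hN hu
  calc ‖A u‖ = ‖A v + A (u - v)‖ := by rw [← map_add, add_sub_cancel]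
    _ ≤ ‖A v‖ + ‖A (u - v)‖ := norm_add_le _ _
    _ ≤ B + ‖A‖ * ε := add_le_add (h v hv) (A.le_opNorm_of_le huv)

lemma mul_norm_le_of_isCover_sphere (h : ∀ u ∈ N, b ≤ ‖A u‖) (u : E) :
    (b - ‖A‖ * ε) * ‖u‖ ≤ ‖A u‖ := by
  have hunit : ∀ u : E, ‖u‖ = 1 → b - ‖A‖ * ε ≤ ‖A u‖ := by
    intro u hu
    obtain ⟨v, hv, huv⟩ := exists_norm_sub_le_of_isCover_sphere hN hu
    calc b - ‖A‖ * ε ≤ ‖A v‖ - ‖A (u - v)‖ := sub_le_sub (h v hv) (A.le_opNorm_of_le huv)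
      _ ≤ ‖A u‖ := by
        rw [map_sub]
        linarith [norm_le_insert (A u) (A v)]
  rcases eq_or_ne u 0 with rfl | hu
  · simp
  · have := hunit (‖u‖⁻¹ • u) (norm_smul_inv_norm hu)
    rwa [map_smul, norm_smul, norm_inv, norm_norm, inv_mul_eq_div,
      le_div_iff₀ (norm_pos_iff.2 hu)] at this

end SphereNet

section UniformGramForm

open scoped NNReal

variable {ι κ : Type*} [Fintype ι] [Fintype κ] {w : κ → ℝ} (h0 : ∀ i, 0 ≤ w i)
  {G : ι → EuclideanSpace ℝ κ} {N : Set (EuclideanSpace ℝ ι)}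
include h0

lemma gramForm_le_of_isCover_sphere (hN : Metric.IsCover (1 / 2) (Metric.sphere 0 1) N) {B : ℝ}
    (hB : 0 ≤ B) (h : ∀ v ∈ N, gramForm w G v ≤ B) (u : EuclideanSpace ℝ ι) :
    gramForm w G u ≤ 4 * B * ‖u‖ ^ 2 := by
  have hnorm : ‖gramRoot w G‖ ≤ √B / (1 - (1 / 2 : ℝ≥0)) :=
    opNorm_le_div_of_isCover_sphere hN (by norm_num [← NNReal.coe_lt_coe]) (Real.sqrt_nonneg B)
      fun v hv => Real.le_sqrt_of_sq_le (norm_sq_gramRoot h0 G v ▸ h v hv)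
  calc gramForm w G u = ‖gramRoot w G u‖ ^ 2 := (norm_sq_gramRoot h0 G u).symm
    _ ≤ (√B / (1 - (1 / 2 : ℝ≥0)) * ‖u‖) ^ 2 := by
      gcongr
      exact (gramRoot w G).le_of_opNorm_le hnorm u
    _ = 4 * B * ‖u‖ ^ 2 := by
      rw [mul_pow, div_pow, Real.sq_sqrt hB, NNReal.coe_div, NNReal.coe_one, NNReal.coe_ofNat]
      ring

lemma le_gramForm_of_isCover_sphere (hN : Metric.IsCover (1 / 8) (Metric.sphere 0 1) N) {S : ℝ}
    (hS : 0 ≤ S) (hupper : ∀ u, gramForm w G u ≤ 9 * S * ‖u‖ ^ 2)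
    (hlower : ∀ v ∈ N, S / 2 ≤ gramForm w G v) (u : EuclideanSpace ℝ ι) :
    S / 16 * ‖u‖ ^ 2 ≤ gramForm w G u := by
  have hnorm : ‖gramRoot w G‖ ≤ 3 * √S := by
    refine (gramRoot w G).opNorm_le_bound (by positivity) fun u => ?_
    refine abs_le_of_sq_le_sq' ?_ (by positivity) |>.2
    rw [norm_sq_gramRoot h0, mul_pow, mul_pow, Real.sq_sqrt hS]
    linarith [hupper u]
  have hnet : ∀ v ∈ N, 5 / 8 * √S ≤ ‖gramRoot w G v‖ := fun v hv => by
    refine abs_le_of_sq_le_sq' ?_ (norm_nonneg _) |>.2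
    rw [norm_sq_gramRoot h0, mul_pow, Real.sq_sqrt hS]
    linarith [hlower v hv]
  calc S / 16 * ‖u‖ ^ 2 = (√S / 4 * ‖u‖) ^ 2 := by
        rw [mul_pow, div_pow, Real.sq_sqrt hS]
        norm_num
    _ ≤ ‖gramRoot w G u‖ ^ 2 := by
        gcongr
        refine le_trans ?_ (mul_norm_le_of_isCover_sphere hN hnet u)
        gcongr
        norm_num
        linarith
    _ = gramForm w G u := norm_sq_gramRoot h0 G u

variable {L : ℝ} (hw : ∀ i, w i ≤ L)
include hw

lemma stdGaussianMatrix_real_exists_lt_gramForm (hL : 0 ≤ L) {T : ℝ} (hT : 0 ≤ T) :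
    (stdGaussianMatrix ι κ).real
      {G | ∃ u, (8 * ∑ i, w i + 16 * L * T) * ‖u‖ ^ 2 < gramForm w G u}
      ≤ 5 ^ Fintype.card ι * Real.exp (-T) := by
  rcases hL.eq_or_lt with rfl | hL
  · have hw0 : ∀ i, w i = 0 := fun i => (hw i).antisymm (h0 i)
    refine le_of_eq_of_le ?_ (by positivity : (0 : ℝ) ≤ _)
    simp [gramForm, hw0]
  obtain ⟨N, hunit, hN, hN_card⟩ :=
    exists_finset_isCover_sphere (E := EuclideanSpace ℝ ι) (ε := 1 / 2) (by positivity)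
  have hcard : (#N : ℝ) ≤ 5 ^ Fintype.card ι :=
    hN_card.trans_eq (by norm_num [finrank_euclideanSpace])
  have hS : 0 ≤ ∑ i, w i := Finset.sum_nonneg fun i _ => h0 i
  calc _ ≤ (stdGaussianMatrix ι κ).real
          (⋃ v ∈ N, {G | 2 * ∑ i, w i + 4 * L * T ≤ gramForm w G v}) := by
        refine measureReal_mono (fun G ⟨u, hu⟩ => ?_) (measure_ne_top _ _)
        by_contra hG
        simp only [Set.mem_iUnion, Set.mem_ofPred_eq, not_exists, not_le] at hG
        refine hu.not_ge ((gramForm_le_of_isCover_sphere h0 hN (by positivity)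
          (fun v hv => (hG v hv).le) u).trans_eq ?_)
        ring
    _ ≤ ∑ _ ∈ N, Real.exp (-T) :=
        (measureReal_biUnion_finset_le _ _).trans <| Finset.sum_le_sum fun v hv =>
          stdGaussianMatrix_real_le_gramForm h0 hL hw (hunit v hv) T
    _ ≤ 5 ^ Fintype.card ι * Real.exp (-T) := by
        rw [Finset.sum_const, nsmul_eq_mul]
        gcongr

lemma stdGaussianMatrix_real_exists_gramForm_lt (hL : 0 < L) :
    (stdGaussianMatrix ι κ).real {G | ∃ u, gramForm w G u < (∑ i, w i) / 16 * ‖u‖ ^ 2}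
      ≤ 2 * 17 ^ Fintype.card ι * Real.exp (-((∑ i, w i) / (32 * L))) := by
  obtain ⟨N, hunit, hN, hN_card⟩ :=
    exists_finset_isCover_sphere (E := EuclideanSpace ℝ ι) (ε := 1 / 8) (by positivity)
  have hcard : (#N : ℝ) ≤ 17 ^ Fintype.card ι :=
    hN_card.trans_eq (by norm_num [finrank_euclideanSpace])
  set S := ∑ i, w i
  have hS : 0 ≤ S := Finset.sum_nonneg fun i _ => h0 i
  have hcover : {G : ι → EuclideanSpace ℝ κ | ∃ u, gramForm w G u < S / 16 * ‖u‖ ^ 2}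
      ⊆ {G | ∃ u, (8 * S + 16 * L * (S / (16 * L))) * ‖u‖ ^ 2 < gramForm w G u}
        ∪ ⋃ v ∈ N, {G | gramForm w G v ≤ S / 2} := by
    rintro G ⟨u, hu⟩
    by_contra hG
    simp only [Set.mem_union, Set.mem_iUnion, Set.mem_ofPred_eq, not_or, not_exists, not_lt,
      not_le] at hG
    refine hu.not_ge (le_gramForm_of_isCover_sphere h0 hN hS (fun u => ?_)
      (fun v hv => (hG.2 v hv).le) u)
    refine (hG.1 u).trans_eq ?_
    field_simp
    ring
  have hupper : (stdGaussianMatrix ι κ).real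
      {G | ∃ u, (8 * S + 16 * L * (S / (16 * L))) * ‖u‖ ^ 2 < gramForm w G u}
      ≤ 17 ^ Fintype.card ι * Real.exp (-(S / (32 * L))) := by
    refine (stdGaussianMatrix_real_exists_lt_gramForm h0 hw hL.le (by positivity)).trans ?_
    gcongr <;> norm_num
  have hlower : (stdGaussianMatrix ι κ).real (⋃ v ∈ N, {G | gramForm w G v ≤ S / 2})
      ≤ 17 ^ Fintype.card ι * Real.exp (-(S / (32 * L))) := by
    refine (measureReal_biUnion_finset_le _ _).trans <| (Finset.sum_le_sum fun v hv =>
      stdGaussianMatrix_real_gramForm_le h0 hL hw (hunit v hv)).trans ?_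
    rw [Finset.sum_const, nsmul_eq_mul]
    gcongr
  linarith [measureReal_mono (μ := stdGaussianMatrix ι κ) hcover, measureReal_union_le
    (μ := stdGaussianMatrix ι κ)
    {G | ∃ u, (8 * S + 16 * L * (S / (16 * L))) * ‖u‖ ^ 2 < gramForm w G u}
    (⋃ v ∈ N, {G | gramForm w G v ≤ S / 2})]

end UniformGramForm

section GoodDesign

variable {ι : Type*} [Fintype ι] {p : ℕ}

lemma gramForm_mono {κ : Type*} [Fintype κ] {w w' : κ → ℝ} (h : w ≤ w')
    (G : ι → EuclideanSpace ℝ κ) (u : EuclideanSpace ℝ ι) : gramForm w G u ≤ gramForm w' G u :=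
  Finset.sum_le_sum fun i _ => mul_le_mul_of_nonneg_right (h i) (sq_nonneg _)

/-- The weights equal to `1` on the first `k` coordinates and to `0` on the others. -/
def headWeight (p k : ℕ) (i : Fin p) : ℝ := if (i : ℕ) < k then 1 else 0

/-- The eigenvalues `σ` with the first `k` ones replaced by `0`. -/
def tailWeight (σ : Fin p → ℝ) (k : ℕ) (i : Fin p) : ℝ := if (i : ℕ) < k then 0 else σ i

/-- The event on which the interpolation error is controlled: for a Gaussian matrix `G` and
eigenvalues `σ`, every truncated Gram matrix `G diag(min(τ, σ)) Gᵀ` is at most a multiple of its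
expected scale, and the Gram matrix `G diag(σ) Gᵀ` of the design is at least `r / 16`. -/
structure IsGoodDesign (σ : Fin p → ℝ) (r : ℝ) (G : ι → EuclideanSpace ℝ (Fin p)) : Prop where
  gramForm_min_le : ∀ τ, 0 ≤ τ → ∀ u, gramForm (fun i => min τ (σ i)) G u
    ≤ (40 * ∑ i, min τ (σ i) + 96 * Fintype.card ι * τ) * ‖u‖ ^ 2
  le_gramForm : ∀ u, r / 16 * ‖u‖ ^ 2 ≤ gramForm σ G u

lemma isClosed_setOf_isGoodDesign (σ : Fin p → ℝ) (r : ℝ) :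
    IsClosed {G : ι → EuclideanSpace ℝ (Fin p) | IsGoodDesign σ r G} := by
  have hset : {G : ι → EuclideanSpace ℝ (Fin p) | IsGoodDesign σ r G}
      = {G | ∀ τ, 0 ≤ τ → ∀ u, gramForm (fun i => min τ (σ i)) G u
          ≤ (40 * ∑ i, min τ (σ i) + 96 * Fintype.card ι * τ) * ‖u‖ ^ 2}
        ∩ {G | ∀ u, r / 16 * ‖u‖ ^ 2 ≤ gramForm σ G u} :=
    Set.ext fun G => ⟨fun h => ⟨h.1, h.2⟩, fun h => ⟨h.1, h.2⟩⟩
  simp only [hset, Set.ofPred_forall]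
  exact (isClosed_iInter fun τ => isClosed_iInter fun _ => isClosed_iInter fun u =>
    isClosed_le (continuous_gramForm _ u) continuous_const).inter
    (isClosed_iInter fun u => isClosed_le continuous_const (continuous_gramForm _ u))

lemma exists_lt_iff_lt_apply_of_antitone {σ : Fin p → ℝ} (hσ : Antitone σ) (τ : ℝ) :
    ∃ k ≤ p, ∀ i : Fin p, (i : ℕ) < k ↔ τ < σ i := by
  have hp : ∀ i : Fin p, p ≤ i → σ i ≤ τ := fun i hi => absurd i.isLt hi.not_gt
  have hex : ∃ k : ℕ, ∀ i : Fin p, k ≤ i → σ i ≤ τ := ⟨p, hp⟩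
  refine ⟨Nat.find hex, Nat.find_min' hex hp, fun i => ⟨fun hi => ?_, fun hi => ?_⟩⟩
  · obtain ⟨j, hij, hj⟩ : ∃ j : Fin p, (i : ℕ) ≤ j ∧ τ < σ j := by
      simpa only [not_forall, not_le, exists_prop] using Nat.find_min hex hi
    exact hj.trans_le (hσ hij)
  · exact lt_of_not_ge fun hle => hi.not_ge (Nat.find_spec hex i hle)

lemma headWeight_nonneg (k : ℕ) (i : Fin p) : 0 ≤ headWeight p k i := by
  unfold headWeight
  split_ifs
  exacts [zero_le_one, le_rfl]

lemma headWeight_le_one (k : ℕ) (i : Fin p) : headWeight p k i ≤ 1 := by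
  unfold headWeight
  split_ifs
  exacts [le_rfl, zero_le_one]

lemma sum_headWeight {k : ℕ} (hk : k ≤ p) : ∑ i, headWeight p k i = k := by
  simp [headWeight, Fin.card_filter_val_lt, hk]

variable {σ : Fin p → ℝ}

lemma min_eq_headWeight_add_tailWeight {τ : ℝ} {k : ℕ}
    (hk : ∀ i : Fin p, (i : ℕ) < k ↔ τ < σ i) (i : Fin p) :
    min τ (σ i) = τ * headWeight p k i + tailWeight σ k i := by
  by_cases hi : (i : ℕ) < k
  · simp [headWeight, tailWeight, hi, ((hk i).1 hi).le]
  · simp [headWeight, tailWeight, hi, not_lt.1 (mt (hk i).2 hi)]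

lemma tailWeight_nonneg (h0 : ∀ i, 0 ≤ σ i) (k : ℕ) (i : Fin p) : 0 ≤ tailWeight σ k i := by
  unfold tailWeight
  split_ifs
  exacts [le_rfl, h0 i]

lemma tailWeight_le_self (h0 : ∀ i, 0 ≤ σ i) (k : ℕ) (i : Fin p) : tailWeight σ k i ≤ σ i := by
  unfold tailWeight
  split_ifs
  exacts [h0 i, le_rfl]

lemma tailWeight_le {k : ℕ} {L : ℝ} (hL : 0 ≤ L) (h : ∀ i : Fin p, k ≤ i → σ i ≤ L) (i : Fin p) :
    tailWeight σ k i ≤ L := by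
  unfold tailWeight
  split_ifs with hi
  exacts [hL, h i (not_lt.1 hi)]

lemma gramForm_min_le_of_head_of_tail (h0 : ∀ i, 0 ≤ σ i) {τ : ℝ} (hτ : 0 ≤ τ) {k : ℕ} (hkp : k ≤ p)
    (hk : ∀ i : Fin p, (i : ℕ) < k ↔ τ < σ i) {G : ι → EuclideanSpace ℝ (Fin p)}
    {u : EuclideanSpace ℝ ι} {m : ℝ} (hm : 0 ≤ m)
    (hhead : gramForm (headWeight p k) G u
      ≤ (8 * ∑ i, headWeight p k i + 16 * 1 * (3 * m + k)) * ‖u‖ ^ 2)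
    (htail : gramForm (tailWeight σ k) G u
      ≤ (8 * ∑ i, tailWeight σ k i + 16 * (⨆ i, tailWeight σ k i) * (3 * m + k)) * ‖u‖ ^ 2) :
    gramForm (fun i => min τ (σ i)) G u
      ≤ (40 * ∑ i, min τ (σ i) + 96 * m * τ) * ‖u‖ ^ 2 := by
  have hsup : ⨆ i, tailWeight σ k i ≤ τ :=
    Real.iSup_le (tailWeight_le hτ fun i hi => not_lt.1 (mt (hk i).2 hi.not_gt)) hτ
  have hmin := min_eq_headWeight_add_tailWeight hk
  have hsum : ∑ i, min τ (σ i) = τ * k + ∑ i, tailWeight σ k i := by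
    simp_rw [hmin, Finset.sum_add_distrib, ← Finset.mul_sum, sum_headWeight hkp]
  have htail0 : 0 ≤ ∑ i, tailWeight σ k i :=
    Finset.sum_nonneg fun i _ => tailWeight_nonneg h0 k i
  rw [sum_headWeight hkp] at hhead
  calc gramForm (fun i => min τ (σ i)) G u
      = τ * gramForm (headWeight p k) G u + gramForm (tailWeight σ k) G u := by
        simp_rw [gramForm, hmin, add_mul, mul_assoc, Finset.sum_add_distrib, ← Finset.mul_sum]
    _ ≤ τ * ((8 * k + 16 * 1 * (3 * m + k)) * ‖u‖ ^ 2)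
        + (8 * ∑ i, tailWeight σ k i + 16 * τ * (3 * m + k)) * ‖u‖ ^ 2 := by
        gcongr
        exact htail.trans (by gcongr)
    _ = (40 * τ * k + 8 * ∑ i, tailWeight σ k i + 96 * m * τ) * ‖u‖ ^ 2 := by ring
    _ ≤ (40 * ∑ i, min τ (σ i) + 96 * m * τ) * ‖u‖ ^ 2 := by
        gcongr
        linarith

lemma sum_range_exp_neg_le_two (m : ℕ) : ∑ k ∈ Finset.range m, Real.exp (-k) ≤ 2 := by
  refine (Finset.sum_le_sum fun k _ => ?_).trans (sum_geometric_two_le m)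
  rw [← mul_neg_one, Real.exp_nat_mul, Real.exp_neg, one_div]
  gcongr
  linarith [Real.exp_one_gt_d9]

lemma pow_le_exp_mul {a b : ℝ} (ha : 0 ≤ a) (hab : a ≤ Real.exp b) (n : ℕ) :
    a ^ n ≤ Real.exp (n * b) := by
  rw [Real.exp_nat_mul]
  gcongr

lemma isGoodDesign_of_forall_head_tail (hanti : Antitone σ) (h0 : ∀ i, 0 ≤ σ i) {r : ℝ}
    {G : ι → EuclideanSpace ℝ (Fin p)}
    (hhead : ∀ k ≤ p, ∀ u, gramForm (headWeight p k) G u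
      ≤ (8 * ∑ i, headWeight p k i + 16 * 1 * (3 * Fintype.card ι + k)) * ‖u‖ ^ 2)
    (htail : ∀ k ≤ p, ∀ u, gramForm (tailWeight σ k) G u
      ≤ (8 * ∑ i, tailWeight σ k i + 16 * (⨆ i, tailWeight σ k i) * (3 * Fintype.card ι + k))
        * ‖u‖ ^ 2)
    {κ : ℕ} (hlower : ∀ u, r / 16 * ‖u‖ ^ 2 ≤ gramForm (tailWeight σ κ) G u) :
    IsGoodDesign σ r G where
  gramForm_min_le τ hτ u := by
    obtain ⟨k, hkp, hk⟩ := exists_lt_iff_lt_apply_of_antitone hanti τ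
    exact gramForm_min_le_of_head_of_tail h0 hτ hkp hk (Nat.cast_nonneg _)
      (hhead k hkp u) (htail k hkp u)
  le_gramForm u := (hlower u).trans (gramForm_mono (tailWeight_le_self h0 κ) G u)

lemma stdGaussianMatrix_real_exists_lt_gramForm_le_exp {κ : Type*} [Fintype κ] {w : κ → ℝ}
    (h0 : ∀ i, 0 ≤ w i) {L : ℝ} (hw : ∀ i, w i ≤ L) (hL : 0 ≤ L) (k : ℕ) :
    (stdGaussianMatrix ι κ).real
      {G | ∃ u, (8 * ∑ i, w i + 16 * L * (3 * Fintype.card ι + k)) * ‖u‖ ^ 2 < gramForm w G u}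
      ≤ Real.exp (-Fintype.card ι) * Real.exp (-k) := by
  have h5 : (5 : ℝ) ≤ Real.exp 2 := by
    calc (5 : ℝ) ≤ 2.7 ^ 2 := by norm_num
      _ ≤ Real.exp 1 ^ 2 := by gcongr; linarith [Real.exp_one_gt_d9]
      _ = Real.exp 2 := Real.exp_one_pow 2
  calc _ ≤ 5 ^ Fintype.card ι * Real.exp (-(3 * Fintype.card ι + k)) :=
        stdGaussianMatrix_real_exists_lt_gramForm h0 hw hL (by positivity)
    _ ≤ Real.exp (Fintype.card ι * 2) * Real.exp (-(3 * Fintype.card ι + k)) := by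
        gcongr
        exact pow_le_exp_mul (by norm_num) h5 _
    _ = Real.exp (-Fintype.card ι) * Real.exp (-k) := by
        rw [← Real.exp_add, ← Real.exp_add]
        ring_nf

lemma stdGaussianMatrix_real_exists_gramForm_lt_le_exp {κ : Type*} [Fintype κ] {w : κ → ℝ}
    (h0 : ∀ i, 0 ≤ w i) {L : ℝ} (hw : ∀ i, w i ≤ L) (hL : 0 < L)
    (hsum : 128 * Fintype.card ι * L ≤ ∑ i, w i) :
    (stdGaussianMatrix ι κ).real {G | ∃ u, gramForm w G u < (∑ i, w i) / 16 * ‖u‖ ^ 2}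
      ≤ 2 * Real.exp (-Fintype.card ι) := by
  have h17 : (17 : ℝ) ≤ Real.exp 3 := by
    calc (17 : ℝ) ≤ 2.7 ^ 3 := by norm_num
      _ ≤ Real.exp 1 ^ 3 := by gcongr; linarith [Real.exp_one_gt_d9]
      _ = Real.exp 3 := Real.exp_one_pow 3
  have hrate : 4 * Fintype.card ι ≤ (∑ i, w i) / (32 * L) := by
    rw [le_div_iff₀ (by positivity)]
    linarith
  calc _ ≤ 2 * 17 ^ Fintype.card ι * Real.exp (-((∑ i, w i) / (32 * L))) :=
        stdGaussianMatrix_real_exists_gramForm_lt h0 hw hL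
    _ ≤ 2 * Real.exp (Fintype.card ι * 3) * Real.exp (-(4 * Fintype.card ι)) := by
        gcongr
        exact pow_le_exp_mul (by norm_num) h17 _
    _ = 2 * Real.exp (-Fintype.card ι) := by
        rw [mul_assoc, ← Real.exp_add]
        ring_nf

lemma stdGaussianMatrix_real_biUnion_exists_lt_gramForm_le {κ : Type*} [Fintype κ]
    {w : ℕ → κ → ℝ} (h0 : ∀ k i, 0 ≤ w k i) {L : ℕ → ℝ} (hw : ∀ k i, w k i ≤ L k)
    (hL : ∀ k, 0 ≤ L k) (m : ℕ) :
    (stdGaussianMatrix ι κ).real (⋃ k ∈ Finset.range m, {G | ∃ u,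
      (8 * ∑ i, w k i + 16 * L k * (3 * Fintype.card ι + k)) * ‖u‖ ^ 2 < gramForm (w k) G u})
      ≤ 2 * Real.exp (-Fintype.card ι) :=
  calc _ ≤ ∑ k ∈ Finset.range m, Real.exp (-Fintype.card ι) * Real.exp (-k) :=
        (measureReal_biUnion_finset_le _ _).trans (Finset.sum_le_sum fun k _ =>
          stdGaussianMatrix_real_exists_lt_gramForm_le_exp (h0 k) (hw k) (hL k) k)
    _ ≤ Real.exp (-Fintype.card ι) * 2 := by
        rw [← Finset.mul_sum]
        gcongr
        exact sum_range_exp_neg_le_two m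
    _ = 2 * Real.exp (-Fintype.card ι) := mul_comm _ _

theorem stdGaussianMatrix_real_not_isGoodDesign_le (hanti : Antitone σ) (h0 : ∀ i, 0 ≤ σ i)
    {κ : ℕ} {L : ℝ} (hL : 0 < L) (hκ : ∀ i : Fin p, κ ≤ i → σ i ≤ L)
    (hsum : 128 * Fintype.card ι * L ≤ ∑ i, tailWeight σ κ i) :
    (stdGaussianMatrix ι (Fin p)).real {G | ¬ IsGoodDesign σ (∑ i, tailWeight σ κ i) G}
      ≤ 6 * Real.exp (-Fintype.card ι) := by
  set μ := stdGaussianMatrix ι (Fin p)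
  set head : Set (ι → EuclideanSpace ℝ (Fin p)) := ⋃ k ∈ Finset.range (p + 1), {G | ∃ u,
    (8 * ∑ i, headWeight p k i + 16 * 1 * (3 * Fintype.card ι + k)) * ‖u‖ ^ 2
      < gramForm (headWeight p k) G u}
  set tail : Set (ι → EuclideanSpace ℝ (Fin p)) := ⋃ k ∈ Finset.range (p + 1), {G | ∃ u,
    (8 * ∑ i, tailWeight σ k i + 16 * (⨆ i, tailWeight σ k i) * (3 * Fintype.card ι + k))
      * ‖u‖ ^ 2 < gramForm (tailWeight σ k) G u}
  set lower : Set (ι → EuclideanSpace ℝ (Fin p)) := {G | ∃ u,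
    gramForm (tailWeight σ κ) G u < (∑ i, tailWeight σ κ i) / 16 * ‖u‖ ^ 2}
  have hsub : {G | ¬ IsGoodDesign σ (∑ i, tailWeight σ κ i) G} ⊆ head ∪ tail ∪ lower := by
    intro G hG
    by_contra hmem
    simp only [head, tail, lower, Set.mem_union, Set.mem_iUnion, Finset.mem_range,
      Set.mem_ofPred_eq, not_or, not_exists, not_lt, Nat.lt_succ_iff] at hmem
    exact hG (isGoodDesign_of_forall_head_tail hanti h0 hmem.1.1 hmem.1.2 hmem.2)
  have hhead : μ.real head ≤ 2 * Real.exp (-Fintype.card ι) :=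
    stdGaussianMatrix_real_biUnion_exists_lt_gramForm_le (w := headWeight p) (L := fun _ => 1)
      headWeight_nonneg headWeight_le_one (fun _ => zero_le_one) (p + 1)
  have htail : μ.real tail ≤ 2 * Real.exp (-Fintype.card ι) :=
    stdGaussianMatrix_real_biUnion_exists_lt_gramForm_le (w := tailWeight σ)
      (tailWeight_nonneg h0) (fun k i => le_ciSup (Set.finite_range _).bddAbove i)
      (fun k => Real.iSup_nonneg (tailWeight_nonneg h0 k)) (p + 1)
  have hlower : μ.real lower ≤ 2 * Real.exp (-Fintype.card ι) :=
    stdGaussianMatrix_real_exists_gramForm_lt_le_exp (tailWeight_nonneg h0 κ)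
      (tailWeight_le hL.le hκ) hL hsum
  calc μ.real {G | ¬ IsGoodDesign σ (∑ i, tailWeight σ κ i) G}
      ≤ μ.real (head ∪ tail ∪ lower) := measureReal_mono hsub
    _ ≤ μ.real head + μ.real tail + μ.real lower :=
        (measureReal_union_le _ _).trans (by gcongr; exact measureReal_union_le _ _)
    _ ≤ 6 * Real.exp (-Fintype.card ι) := by linarith

lemma ofReal_one_sub_exp_le_stdGaussianMatrix_isGoodDesign (hanti : Antitone σ)
    (h0 : ∀ i, 0 ≤ σ i) {κ : ℕ} {L : ℝ} (hL : 0 < L) (hκ : ∀ i : Fin p, κ ≤ i → σ i ≤ L)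
    (hsum : 128 * Fintype.card ι * L ≤ ∑ i, tailWeight σ κ i) :
    ENNReal.ofReal (1 - 6 * Real.exp (-Fintype.card ι))
      ≤ stdGaussianMatrix ι (Fin p) {G | IsGoodDesign σ (∑ i, tailWeight σ κ i) G} := by
  rw [← ofReal_measureReal, ← compl_compl {G | IsGoodDesign σ _ G},
    probReal_compl_eq_one_sub (isClosed_setOf_isGoodDesign σ _).measurableSet.compl]
  gcongr
  exact stdGaussianMatrix_real_not_isGoodDesign_le hanti h0 hL hκ hsum

end GoodDesign

section GaussianDesign

variable {ι κ : Type*} [Fintype κ]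

lemma norm_toLp_transpose_mulVec [DecidableEq κ] {Q : Matrix κ κ ℝ} (hQ : Q * Qᵀ = 1) (d : κ → ℝ) :
    ‖WithLp.toLp 2 (Qᵀ *ᵥ d)‖ = ‖WithLp.toLp 2 d‖ := by
  have hdot : (Qᵀ *ᵥ d) ⬝ᵥ (Qᵀ *ᵥ d) = d ⬝ᵥ d := by
    rw [Matrix.dotProduct_mulVec, Matrix.vecMul_transpose, Matrix.mulVec_mulVec, hQ,
      Matrix.one_mulVec]
  simpa only [EuclideanSpace.norm_eq, Real.norm_eq_abs, sq_abs, dotProduct, ← sq] using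
    congrArg Real.sqrt hdot

lemma map_transpose_mulVec_stdGaussian [DecidableEq κ] {Q : Matrix κ κ ℝ} (hQ : Q * Qᵀ = 1) :
    (ProbabilityTheory.stdGaussian (EuclideanSpace ℝ κ)).map
        (fun z => WithLp.toLp 2 (Qᵀ *ᵥ z.ofLp))
      = ProbabilityTheory.stdGaussian (EuclideanSpace ℝ κ) :=
  let rotation : EuclideanSpace ℝ κ →ₗᵢ[ℝ] EuclideanSpace ℝ κ :=
    { toLinearMap := Matrix.toEuclideanLin Qᵀ
      norm_map' := fun z => norm_toLp_transpose_mulVec hQ z.ofLp }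
  stdGaussian_map (rotation.toLinearIsometryEquiv rfl)

/-- The design whose rows are the images of the rows of `G` under `Q diag(σ)^{1/2}`; for a
Gaussian matrix `G` and an orthogonal `Q` they have covariance `Q diag(σ) Qᵀ`. -/
def gaussianDesign (Q : Matrix κ κ ℝ) (σ : κ → ℝ) (G : ι → EuclideanSpace ℝ κ) : ι → κ → ℝ :=
  fun a => Q *ᵥ fun i => √(σ i) * G a i

lemma continuous_gaussianDesign (Q : Matrix κ κ ℝ) (σ : κ → ℝ) :
    Continuous (gaussianDesign (ι := ι) Q σ) := by
  unfold gaussianDesign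
  fun_prop

lemma sum_gaussianDesign_mul [Fintype ι] (Q : Matrix κ κ ℝ) (σ : κ → ℝ)
    (G : ι → EuclideanSpace ℝ κ) (a : ι) (d : κ → ℝ) :
    ∑ j, gaussianDesign Q σ G a j * d j
      = (gramRoot σ G).adjoint (WithLp.toLp 2 (Qᵀ *ᵥ d)) a := by
  have hentry : gramRoot σ G (EuclideanSpace.single a 1)
      = WithLp.toLp 2 fun i => √(σ i) * G a i := by
    ext i
    simp [gramRoot_apply]
  have hadj : (gramRoot σ G).adjoint (WithLp.toLp 2 (Qᵀ *ᵥ d)) a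
      = inner ℝ (EuclideanSpace.single a 1) ((gramRoot σ G).adjoint (WithLp.toLp 2 (Qᵀ *ᵥ d))) := by
    simp [EuclideanSpace.inner_single_left]
  rw [hadj, ContinuousLinearMap.adjoint_inner_right, hentry, EuclideanSpace.inner_toLp_toLp]
  change _ ⬝ᵥ _ = _
  simp [gaussianDesign, Matrix.mulVec_transpose, Matrix.dotProduct_mulVec, dotProduct_comm]

lemma mvGaussian_eq_map {p : ℕ} (lam : ℕ → ℝ) {Q : Matrix (Fin p) (Fin p) ℝ} (hQ : Q * Qᵀ = 1) :
    mvGaussian p lam Q = (ProbabilityTheory.stdGaussian (EuclideanSpace ℝ (Fin p))).map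
      (fun z => Q *ᵥ fun i => √(lam (i + 1)) * z i) := by
  have hstd : _root_.stdGaussian p
      = (ProbabilityTheory.stdGaussian (EuclideanSpace ℝ (Fin p))).map WithLp.ofLp := by
    rw [← map_pi_eq_stdGaussian, Measure.map_map (by fun_prop) (by fun_prop)]
    exact Measure.map_id.symm
  conv_rhs => rw [← map_transpose_mulVec_stdGaussian hQ]
  rw [mvGaussian, hstd, Measure.map_map (by fun_prop) (by fun_prop),
    Measure.map_map (by fun_prop) (by fun_prop)]
  congr 1
  funext z
  simp only [Function.comp_apply, covHalf, ← Matrix.mulVec_mulVec]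
  exact congrArg (Q *ᵥ ·) (funext fun i => Matrix.mulVec_diagonal _ _ i)

lemma pi_mvGaussian_eq_map {ι : Type*} [Fintype ι] {p : ℕ} (lam : ℕ → ℝ)
    {Q : Matrix (Fin p) (Fin p) ℝ} (hQ : Q * Qᵀ = 1) :
    (Measure.pi fun _ : ι => mvGaussian p lam Q) = (stdGaussianMatrix ι (Fin p)).map
      (gaussianDesign Q fun i => lam (i + 1)) := by
  simp_rw [mvGaussian_eq_map lam hQ]
  exact (Measure.pi_map_pi fun _ => Continuous.aemeasurable (by fun_prop)).symm

end GaussianDesign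

lemma measure_le_of_map_eq_map {α β Ω : Type*} [TopologicalSpace α] [SigmaCompactSpace α]
    [MeasurableSpace α] [OpensMeasurableSpace α] [TopologicalSpace β] [T2Space β]
    [MeasurableSpace β] [BorelSpace β] [MeasurableSpace Ω] {P : Measure Ω} {μ : Measure α}
    {X : Ω → β} {Φ : α → β} (hΦ : Continuous Φ)
    (hmap : P.map X = μ.map Φ) {C : Set α} (hC : IsClosed C) :
    μ C ≤ P {ω | ∃ x ∈ C, Φ x = X ω} := by
  rcases eq_or_ne μ 0 with rfl | hμ
  · simp
  have hX : AEMeasurable X P := AEMeasurable.of_map_ne_zero (by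
    rwa [hmap, Measure.map_ne_zero_iff hΦ.aemeasurable])
  have hmeas : MeasurableSet (Φ '' C) := by
    obtain ⟨K, hK, hKC⟩ := (isSigmaCompact_univ.of_isClosed_subset hC (Set.subset_univ C)).image hΦ
    exact hKC ▸ MeasurableSet.iUnion fun m => (hK m).measurableSet
  calc μ C ≤ μ (Φ ⁻¹' (Φ '' C)) := measure_mono (Set.subset_preimage_image Φ C)
    _ = P.map X (Φ '' C) := by rw [hmap, Measure.map_apply hΦ.measurable hmeas]
    _ = P {ω | ∃ x ∈ C, Φ x = X ω} := Measure.map_apply_of_aemeasurable hX hmeas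

section Interpolation

variable {E F : Type*} [NormedAddCommGroup E] [InnerProductSpace ℝ E] [FiniteDimensional ℝ E]
  [NormedAddCommGroup F] [InnerProductSpace ℝ F] [FiniteDimensional ℝ F]

lemma exists_adjoint_eq_of_mul_norm_le {B : E →L[ℝ] F} {c : ℝ} (hc : 0 < c)
    (hB : ∀ u, c * ‖u‖ ≤ ‖B u‖) (y : E) : ∃ x, B.adjoint x = y ∧ c * ‖x‖ ≤ ‖y‖ := by
  have hinj : Function.Injective B := (injective_iff_map_eq_zero B).2 fun u hu =>
    norm_le_zero_iff.1 (nonpos_of_mul_nonpos_right ((hB u).trans_eq (by simp [hu])) hc)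
  obtain ⟨u, rfl⟩ := (LinearMap.injective_iff_surjective (f := (B.adjoint ∘L B : E →ₗ[ℝ] E))).1
    ((ContinuousLinearMap.adjoint_comp_self_injective_iff B).2 hinj) y
  refine ⟨B u, rfl, ?_⟩
  change _ ≤ ‖B.adjoint (B u)‖
  have hnorm : ‖B u‖ ^ 2 ≤ ‖u‖ * ‖B.adjoint (B u)‖ := by
    rw [← real_inner_self_eq_norm_sq, ← ContinuousLinearMap.adjoint_inner_right]
    exact real_inner_le_norm _ _
  rcases eq_or_ne u 0 with rfl | hu
  · simp
  refine le_of_mul_le_mul_left ?_ (norm_pos_iff.2 hu)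
  calc ‖u‖ * (c * ‖B u‖) = c * ‖u‖ * ‖B u‖ := by ring
    _ ≤ ‖B u‖ * ‖B u‖ := by gcongr; exact hB u
    _ ≤ ‖u‖ * ‖B.adjoint (B u)‖ := by rwa [← sq]

end Interpolation

section Deterministic

variable {ι : Type*} [Fintype ι] {p : ℕ} {σ : Fin p → ℝ} {r : ℝ} {G : ι → EuclideanSpace ℝ (Fin p)}

lemma sq_sum_sqrt_mul_mul_le {κ : Type*} [Fintype κ] {σ : κ → ℝ} (h0 : ∀ i, 0 ≤ σ i) {τ : ℝ}
    (hτ : 0 < τ) (a e : κ → ℝ) :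
    (∑ i, √(σ i) * a i * e i) ^ 2
      ≤ (∑ i, min τ (σ i) * a i ^ 2) * (∑ i, e i ^ 2 + (∑ i, σ i * e i ^ 2) / τ) := by
  have hmin : ∀ i, 0 ≤ min τ (σ i) := fun i => le_min hτ.le (h0 i)
  have hcoef : ∀ i, σ i ≤ min τ (σ i) * (1 + σ i / τ) := by
    intro i
    have := h0 i
    rcases le_total τ (σ i) with h | h
    · rw [min_eq_left h, mul_add, mul_div_cancel₀ _ hτ.ne']
      linarith
    · rw [min_eq_right h]
      exact le_mul_of_one_le_right (h0 i) (le_add_of_nonneg_right (by positivity))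
  have hsum : ∑ i, (1 + σ i / τ) * e i ^ 2 = ∑ i, e i ^ 2 + (∑ i, σ i * e i ^ 2) / τ := by
    simp only [add_mul, one_mul, Finset.sum_add_distrib, Finset.sum_div, div_mul_eq_mul_div]
  rw [← hsum]
  refine Finset.sum_sq_le_sum_mul_sum_of_sq_le_mul _ (fun i _ => mul_nonneg (hmin i) (sq_nonneg _))
    (fun i _ => mul_nonneg (add_nonneg zero_le_one (div_nonneg (h0 i) hτ.le)) (sq_nonneg _))
    fun i _ => ?_
  calc (√(σ i) * a i * e i) ^ 2 = σ i * (a i ^ 2 * e i ^ 2) := by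
        rw [mul_pow, mul_pow, Real.sq_sqrt (h0 i), mul_assoc]
    _ ≤ min τ (σ i) * (1 + σ i / τ) * (a i ^ 2 * e i ^ 2) := by
        gcongr
        exact hcoef i
    _ = min τ (σ i) * a i ^ 2 * ((1 + σ i / τ) * e i ^ 2) := by ring

lemma sq_norm_adjoint_gramRoot_sq_le {κ : Type*} [Fintype κ] {σ : κ → ℝ} (h0 : ∀ i, 0 ≤ σ i)
    {τ : ℝ} (hτ : 0 < τ) (G : ι → EuclideanSpace ℝ κ) (e : EuclideanSpace ℝ κ) :
    (‖(gramRoot σ G).adjoint e‖ ^ 2) ^ 2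
      ≤ gramForm (fun i => min τ (σ i)) G ((gramRoot σ G).adjoint e)
        * (‖e‖ ^ 2 + (∑ i, σ i * e i ^ 2) / τ) := by
  set u := (gramRoot σ G).adjoint e
  have hnorm : ‖u‖ ^ 2 = ∑ i, √(σ i) * (∑ a, u a • G a) i * e i := by
    rw [← real_inner_self_eq_norm_sq, ContinuousLinearMap.adjoint_inner_left]
    simp [PiLp.inner_apply, gramRoot_apply]
  rw [hnorm, EuclideanSpace.real_norm_sq_eq]
  exact sq_sum_sqrt_mul_mul_le h0 hτ _ _

namespace IsGoodDesign

lemma exists_adjoint_gramRoot_eq (hG : IsGoodDesign σ r G) (h0 : ∀ i, 0 ≤ σ i) (hr : 0 < r)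
    (y : EuclideanSpace ℝ ι) : ∃ e, (gramRoot σ G).adjoint e = y ∧ ‖e‖ ≤ 4 * ‖y‖ / √r := by
  have hlower : ∀ u, √r / 4 * ‖u‖ ≤ ‖gramRoot σ G u‖ := fun u => by
    refine le_of_sq_le_sq ?_ (norm_nonneg _)
    rw [norm_sq_gramRoot h0, mul_pow, div_pow, Real.sq_sqrt hr.le]
    exact (by norm_num : r / 4 ^ 2 * ‖u‖ ^ 2 = r / 16 * ‖u‖ ^ 2).trans_le (hG.le_gramForm u)
  obtain ⟨e, he, hle⟩ := exists_adjoint_eq_of_mul_norm_le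
    (div_pos (Real.sqrt_pos.2 hr) four_pos) hlower y
  refine ⟨e, he, (le_div_iff₀ (Real.sqrt_pos.2 hr)).2 ?_⟩
  linarith

lemma sq_norm_adjoint_gramRoot_le (hG : IsGoodDesign σ r G) (h0 : ∀ i, 0 ≤ σ i) {τ : ℝ}
    (hτ : 0 < τ) (e : EuclideanSpace ℝ (Fin p)) :
    ‖(gramRoot σ G).adjoint e‖ ^ 2 ≤ (40 * ∑ i, min τ (σ i) + 96 * Fintype.card ι * τ)
      * (‖e‖ ^ 2 + (∑ i, σ i * e i ^ 2) / τ) := by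
  set u := (gramRoot σ G).adjoint e
  have herr : 0 ≤ (∑ i, σ i * e i ^ 2) / τ :=
    div_nonneg (Finset.sum_nonneg fun i _ => mul_nonneg (h0 i) (sq_nonneg _)) hτ.le
  rcases eq_or_ne u 0 with hu | hu
  · have hsum : 0 ≤ ∑ i, min τ (σ i) := Finset.sum_nonneg fun i _ => le_min hτ.le (h0 i)
    rw [hu, norm_zero, sq, zero_mul]
    positivity
  refine le_of_mul_le_mul_left ?_ (pow_pos (norm_pos_iff.2 hu) 2)
  calc ‖u‖ ^ 2 * ‖u‖ ^ 2 = (‖u‖ ^ 2) ^ 2 := (sq _).symm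
    _ ≤ gramForm (fun i => min τ (σ i)) G u * (‖e‖ ^ 2 + (∑ i, σ i * e i ^ 2) / τ) :=
        sq_norm_adjoint_gramRoot_sq_le h0 hτ G e
    _ ≤ (40 * ∑ i, min τ (σ i) + 96 * Fintype.card ι * τ) * ‖u‖ ^ 2
        * (‖e‖ ^ 2 + (∑ i, σ i * e i ^ 2) / τ) := by
        gcongr
        exact hG.gramForm_min_le τ hτ.le u
    _ = ‖u‖ ^ 2 * ((40 * ∑ i, min τ (σ i) + 96 * Fintype.card ι * τ)
        * (‖e‖ ^ 2 + (∑ i, σ i * e i ^ 2) / τ)) := by ring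

lemma lt_sum_mul_sq (hG : IsGoodDesign σ r G) (h0 : ∀ i, 0 ≤ σ i) {e : EuclideanSpace ℝ (Fin p)}
    (he : (gramRoot σ G).adjoint e ≠ 0) {ρ : ℝ} (hρ : 0 < ρ) (heρ : ‖e‖ ≤ 2 * ρ) {t : ℝ}
    (ht : 0 < t) {γ c : ℝ} (hγc : 200 * γ + 480 * c < 1)
    (hmin : ∑ i, min (σ i * ρ ^ 2) t ≤ γ * ‖(gramRoot σ G).adjoint e‖ ^ 2)
    (hcard : Fintype.card ι * t ≤ c * ‖(gramRoot σ G).adjoint e‖ ^ 2) :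
    t < ∑ i, σ i * e i ^ 2 := by
  set N := ‖(gramRoot σ G).adjoint e‖ ^ 2
  have hN : 0 < N := by positivity
  by_contra! hle
  have hτ : 0 < t / ρ ^ 2 := by positivity
  have hscale : (∑ i, min (t / ρ ^ 2) (σ i)) * ρ ^ 2 = ∑ i, min (σ i * ρ ^ 2) t := by
    simp_rw [Finset.sum_mul, min_comm (t / ρ ^ 2), min_mul_of_nonneg _ _ (sq_nonneg ρ),
      div_mul_cancel₀ t (pow_pos hρ 2).ne']
  have herr : (∑ i, σ i * e i ^ 2) / (t / ρ ^ 2) ≤ ρ ^ 2 := by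
    rw [div_le_iff₀ hτ, mul_div_cancel₀ _ (pow_pos hρ 2).ne']
    exact hle
  have hsum0 : 0 ≤ ∑ i, min (t / ρ ^ 2) (σ i) :=
    Finset.sum_nonneg fun i _ => le_min hτ.le (h0 i)
  have hN_lt : N < N := by
    calc N ≤ (40 * ∑ i, min (t / ρ ^ 2) (σ i) + 96 * Fintype.card ι * (t / ρ ^ 2))
          * (‖e‖ ^ 2 + (∑ i, σ i * e i ^ 2) / (t / ρ ^ 2)) :=
          hG.sq_norm_adjoint_gramRoot_le h0 hτ e
      _ ≤ (40 * ∑ i, min (t / ρ ^ 2) (σ i) + 96 * Fintype.card ι * (t / ρ ^ 2))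
          * ((2 * ρ) ^ 2 + ρ ^ 2) := by gcongr
      _ = 200 * ∑ i, min (σ i * ρ ^ 2) t + 480 * (Fintype.card ι * t) := by
          rw [← hscale]
          field_simp
          ring
      _ ≤ (200 * γ + 480 * c) * N := by linarith
      _ < N := mul_lt_of_lt_one_left hN hγc
  exact hN_lt.false

end IsGoodDesign

end Deterministic

section MinimumNormInterpolation

lemma enorm2_eq_norm {m : ℕ} (v : Fin m → ℝ) : enorm2 v = ‖WithLp.toLp 2 v‖ := by
  simp [enorm2, EuclideanSpace.norm_eq]

lemma enorm2_nonneg {m : ℕ} (v : Fin m → ℝ) : 0 ≤ enorm2 v := Real.sqrt_nonneg _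

lemma predNorm_sq {p : ℕ} (Q : Matrix (Fin p) (Fin p) ℝ) {σ : Fin p → ℝ} (h0 : ∀ i, 0 ≤ σ i)
    (d : Fin p → ℝ) :
    predNorm (Q * Matrix.diagonal σ * Qᵀ) d ^ 2 = ∑ i, σ i * (Qᵀ *ᵥ d) i ^ 2 := by
  have hquad : d ⬝ᵥ (Q * Matrix.diagonal σ * Qᵀ) *ᵥ d = ∑ i, σ i * (Qᵀ *ᵥ d) i ^ 2 := by
    rw [← Matrix.mulVec_mulVec, ← Matrix.mulVec_mulVec, Matrix.dotProduct_mulVec,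
      ← Matrix.mulVec_transpose]
    simp only [dotProduct, Matrix.mulVec_diagonal]
    exact Finset.sum_congr rfl fun i _ => by ring
  rw [predNorm, hquad, Real.sq_sqrt]
  exact Finset.sum_nonneg fun i _ => mul_nonneg (h0 i) (sq_nonneg _)

namespace IsMinInterp

variable {n p : ℕ} {M : Fin n → Fin p → ℝ} {ξ : Fin n → ℝ} {β b : Fin p → ℝ}

lemma sum_mul_sub (hb : IsMinInterp M (fun a => (∑ j, M a j * β j) + ξ a) b) (a : Fin n) :
    ∑ j, M a j * (b j - β j) = ξ a := by
  simp only [mul_sub, Finset.sum_sub_distrib, hb.1 a, add_sub_cancel_left]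

lemma enorm2_sub_le (hb : IsMinInterp M (fun a => (∑ j, M a j * β j) + ξ a) b) {h : Fin p → ℝ}
    (hh : ∀ a, ∑ j, M a j * h j = ξ a) :
    enorm2 (fun j => b j - β j) ≤ 2 * enorm2 β + enorm2 h := by
  have hmin : enorm2 b ≤ enorm2 (β + h) := hb.2 (β + h) fun a => by
    simp only [Pi.add_apply, mul_add, Finset.sum_add_distrib, hh]
  change enorm2 (b - β) ≤ _
  simp only [enorm2_eq_norm, WithLp.toLp_add, WithLp.toLp_sub] at hmin ⊢
  linarith [norm_sub_le (WithLp.toLp 2 b) (WithLp.toLp 2 β),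
    norm_add_le (WithLp.toLp 2 β) (WithLp.toLp 2 h)]

end IsMinInterp

lemma exists_lt_of_lt_rbar {p : ℕ} {lam : ℕ → ℝ} {γ ρ ξnorm x : ℝ} (hx : 0 ≤ x)
    (hlt : x < rbar p lam γ ρ ξnorm) :
    ∃ s, x < s ∧ ∑ i : Fin p, min (lam ((i : ℕ) + 1) * ρ ^ 2) (s ^ 2) ≤ γ * ξnorm ^ 2 := by
  obtain ⟨s, hs, hxs⟩ := exists_lt_of_lt_csSup
    (Set.nonempty_iff_ne_empty.2 fun hempty => (hx.trans_lt hlt).ne' (by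
      rw [rbar, hempty, Real.sSup_empty])) hlt
  exact ⟨s, hxs, hs.2⟩

namespace IsGoodDesign

variable {n p : ℕ} {r : ℝ} {Q : Matrix (Fin p) (Fin p) ℝ} {ξ : Fin n → ℝ} {β b : Fin p → ℝ}
  {G : Fin n → EuclideanSpace ℝ (Fin p)}

lemma enorm2_sub_le {σ : Fin p → ℝ} (hG : IsGoodDesign σ r G) (h0 : ∀ i, 0 ≤ σ i) (hr : 0 < r)
    (hQ : Q * Qᵀ = 1)
    (hb : IsMinInterp (gaussianDesign Q σ G)
      (fun a => (∑ j, gaussianDesign Q σ G a j * β j) + ξ a) b) :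
    enorm2 (fun j => b j - β j) ≤ 2 * (enorm2 β + 4 * enorm2 ξ / √r) := by
  obtain ⟨e, he, hle⟩ := hG.exists_adjoint_gramRoot_eq h0 hr (WithLp.toLp 2 ξ)
  have hQe : Qᵀ *ᵥ (Q *ᵥ e.ofLp) = e.ofLp := by
    rw [Matrix.mulVec_mulVec, mul_eq_one_comm.1 hQ, Matrix.one_mulVec]
  have hnorm : enorm2 (Q *ᵥ e.ofLp) = ‖e‖ := by
    rw [enorm2_eq_norm, ← norm_toLp_transpose_mulVec hQ, hQe]
  have hinterp := hb.enorm2_sub_le (h := Q *ᵥ e.ofLp) fun a => by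
    rw [sum_gaussianDesign_mul, hQe, he]
  rw [hnorm] at hinterp
  rw [← enorm2_eq_norm ξ] at hle
  linarith [norm_nonneg e]

theorem min_rbar_sq_le {lam : ℕ → ℝ} (hG : IsGoodDesign (fun i : Fin p => lam (i + 1)) r G)
    (h0 : ∀ i : Fin p, 0 ≤ lam (i + 1)) (hr : 0 < r) (hQ : Q * Qᵀ = 1) (hn : 0 < n)
    {γ c : ℝ} (hγc : 200 * γ + 480 * c < 1)
    (hb : IsMinInterp (gaussianDesign Q (fun i => lam (i + 1)) G)
      (fun a => (∑ j, gaussianDesign Q (fun i => lam (i + 1)) G a j * β j) + ξ a) b) :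
    min (rbar p lam γ (enorm2 β + 4 * enorm2 ξ / √r) (enorm2 ξ) ^ 2) (c * enorm2 ξ ^ 2 / n)
      ≤ predNorm (Q * Matrix.diagonal (fun i : Fin p => lam (i + 1)) * Qᵀ)
          (fun j => b j - β j) ^ 2 := by
  set d : Fin p → ℝ := fun j => b j - β j
  set ρ := enorm2 β + 4 * enorm2 ξ / √r
  set v := predNorm (Q * Matrix.diagonal (fun i : Fin p => lam (i + 1)) * Qᵀ) d
  have hv : 0 ≤ v := Real.sqrt_nonneg _
  by_contra! hlt
  obtain ⟨hrbar, hnoise⟩ := lt_min_iff.1 hlt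
  have hrbar0 : 0 ≤ rbar p lam γ ρ (enorm2 ξ) := Real.sSup_nonneg fun s hs => hs.1.le
  obtain ⟨s, hvs, hs⟩ := exists_lt_of_lt_rbar hv (lt_of_pow_lt_pow_left₀ 2 hrbar0 hrbar)
  set t := min (s ^ 2) (c * enorm2 ξ ^ 2 / n)
  have hvt : v ^ 2 < t := lt_min (by gcongr) hnoise
  have hadj : (gramRoot (fun i : Fin p => lam (i + 1)) G).adjoint (WithLp.toLp 2 (Qᵀ *ᵥ d))
      = WithLp.toLp 2 ξ := by
    ext a
    rw [← sum_gaussianDesign_mul, hb.sum_mul_sub]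
  have hξ : 0 < enorm2 ξ := (enorm2_nonneg ξ).lt_of_ne' fun hξ0 =>
    (sq_nonneg v).not_gt (hnoise.trans_eq (by rw [hξ0, sq, zero_mul, mul_zero, zero_div]))
  have hρ : 0 < ρ := add_pos_of_nonneg_of_pos (enorm2_nonneg β) (by positivity)
  refine hvt.not_gt ?_
  rw [predNorm_sq Q h0]
  refine hG.lt_sum_mul_sq (e := WithLp.toLp 2 (Qᵀ *ᵥ d)) h0 ?_ hρ ?_
    ((sq_nonneg v).trans_lt hvt) hγc ?_ ?_
  · rw [hadj]
    exact norm_pos_iff.1 (by rwa [← enorm2_eq_norm])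
  · rw [norm_toLp_transpose_mulVec hQ, ← enorm2_eq_norm]
    exact hG.enorm2_sub_le h0 hr hQ hb
  · rw [hadj, ← enorm2_eq_norm]
    exact (Finset.sum_le_sum fun i _ => min_le_min_left _ (min_le_left _ _)).trans hs
  · rw [hadj, ← enorm2_eq_norm, Fintype.card_fin, ← le_div_iff₀' (by positivity)]
    exact min_le_right _ _

end IsGoodDesign

lemma rsum_succ (p : ℕ) (lam : ℕ → ℝ) (κ : ℕ) :
    rsum p lam (κ + 1) = ∑ i, tailWeight (fun i : Fin p => lam (i + 1)) κ i := by
  have hrange : ∑ i, tailWeight (fun i : Fin p => lam (i + 1)) κ i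
      = ∑ j ∈ Finset.range p, if j < κ then 0 else lam (j + 1) :=
    Fin.sum_univ_eq_sum_range (fun j => if j < κ then 0 else lam (j + 1)) p
  have hfilter : {j ∈ Finset.range p | ¬ j < κ} = Finset.Ico κ p := by
    ext j
    simp only [Finset.mem_filter, Finset.mem_range, Finset.mem_Ico]
    lia
  rw [hrange, Finset.sum_ite, Finset.sum_const_zero, zero_add, hfilter,
    Finset.sum_Ico_add' lam κ p 1, Finset.Ico_add_one_right_eq_Icc, rsum]

lemma exists_kstar_eq_succ {p : ℕ} {lam : ℕ → ℝ} (h0 : ∀ i : Fin p, 0 ≤ lam (i + 1)) {c0 : ℝ}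
    {n : ℕ} (hc0n : 0 < c0 * n) (hne : (kstarSet p lam c0 n).Nonempty) :
    ∃ κ, kstar p lam c0 n = κ + 1 ∧ 0 < lam (κ + 1) ∧
      c0 * n * lam (κ + 1) ≤ rsum p lam (κ + 1) := by
  obtain ⟨hk1, hkp, hkr⟩ : kstar p lam c0 n ∈ kstarSet p lam c0 n := Nat.sInf_mem hne
  obtain ⟨κ, hκ⟩ := Nat.exists_eq_add_one.2 hk1
  rw [hκ] at hkp hkr
  have hpos : 0 < lam (κ + 1) := (h0 ⟨κ, hkp⟩).lt_of_ne' fun hzero => by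
    rw [hzero, div_zero] at hkr
    exact hc0n.not_ge hkr
  exact ⟨κ, hκ, hpos, (le_div_iff₀ hpos).1 hkr⟩

end MinimumNormInterpolation

theorem stmt9_general {c0 c3 γ : ℝ} (hc0 : 128 ≤ c0) (hγ : 200 * γ + 480 * c3 < 1)
    {n p : ℕ} (hn : 0 < n) {lam : ℕ → ℝ} {Porth Sig : Matrix (Fin p) (Fin p) ℝ}
    (hlam : ∀ k, 1 ≤ k → k ≤ p → 0 ≤ lam k)
    (hanti : ∀ j k, 1 ≤ j → j ≤ k → k ≤ p → lam k ≤ lam j)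
    (horth : Porth * Porthᵀ = 1)
    (hSig : Sig = Porth * Matrix.diagonal (fun i : Fin p => lam ((i : ℕ) + 1)) * Porthᵀ)
    {Ω : Type*} [MeasurableSpace Ω] {P : Measure Ω}
    {X : Ω → Fin n → Fin p → ℝ} {ξ : Ω → Fin n → ℝ} {βstar βhat : Ω → Fin p → ℝ}
    (hX : P.map X = Measure.pi fun _ : Fin n => mvGaussian p lam Porth)
    (hβhat : ∀ᵐ ω ∂P, IsMinInterp (X ω)
      (fun i => (∑ j, X ω i j * βstar ω j) + ξ ω i) (βhat ω))
    (hne : (kstarSet p lam c0 n).Nonempty) :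
    ENNReal.ofReal (1 - 6 * Real.exp (-n)) ≤
      P {ω | min (rbar p lam γ (rho p lam c0 n (βstar ω) (enorm2 (ξ ω))) (enorm2 (ξ ω)) ^ 2)
          (c3 * enorm2 (ξ ω) ^ 2 / n) ≤ predNorm Sig (fun j => βhat ω j - βstar ω j) ^ 2} := by
  have : (0 : ℝ) < n := Nat.cast_pos.2 hn
  have h0 : ∀ i : Fin p, 0 ≤ lam (i + 1) := fun i => hlam _ (by lia) (by lia)
  have hσ : Antitone fun i : Fin p => lam (i + 1) := fun i j hij =>
    hanti _ _ (by lia) (Nat.succ_le_succ hij) (by lia)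
  obtain ⟨κ, hκ, hL, hrank⟩ := exists_kstar_eq_succ h0 (by positivity) hne
  have hr : 0 < rsum p lam (κ + 1) := lt_of_lt_of_le (by positivity) hrank
  have hsum : 128 * n * lam (κ + 1) ≤ rsum p lam (κ + 1) := le_trans (by gcongr) hrank
  have hrow := pi_mvGaussian_eq_map (ι := Fin n) lam horth
  calc ENNReal.ofReal (1 - 6 * Real.exp (-n))
      ≤ stdGaussianMatrix (Fin n) (Fin p)
          {G | IsGoodDesign (fun i : Fin p => lam (i + 1)) (rsum p lam (κ + 1)) G} := by
        rw [rsum_succ] at hsum ⊢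
        simpa using ofReal_one_sub_exp_le_stdGaussianMatrix_isGoodDesign (ι := Fin n) hσ h0 hL
          (fun i hi => hanti _ _ (by lia) (by lia) (by lia)) (by simpa using hsum)
    _ ≤ P {ω | ∃ G, IsGoodDesign (fun i : Fin p => lam (i + 1)) (rsum p lam (κ + 1)) G ∧
          gaussianDesign Porth (fun i => lam (i + 1)) G = X ω} :=
        measure_le_of_map_eq_map (continuous_gaussianDesign _ _) (hX.trans hrow)
          (isClosed_setOf_isGoodDesign _ _)
    _ ≤ _ := by
        refine measure_mono_ae ?_
        filter_upwards [hβhat] with ω hω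
        rintro ⟨G, hG, hGX⟩
        rw [← hGX] at hω
        change min _ _ ≤ _
        rw [hSig, rho, hκ]
        exact hG.min_rbar_sq_le h0 hr horth hn hγ hω

/-- Theorem 3: in the model `Y = Xβ* + ξ` with `p ≥ n`, `k* ≤ c n`,
and rows of `X` conditionally on `ξ` i.i.d. `N(0,Σ)` (formalized as independence plus
the product Gaussian law), there exist constants `c₁, c₂, c₃ > 0` such that if `γ > 0`
is small enough, with probability at least `1 - c₁ e^{-c₂ n}`,
`min(r̄(γ)², c₃‖ξ‖₂²/n) ≤ ‖Σ^{1/2}(β̂ - β*)‖₂²`. -/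
theorem stmt9 :
    ∃ c0 > (0 : ℝ), ∃ c > (0 : ℝ),
    ∃ c1 > (0 : ℝ), ∃ c2 > (0 : ℝ), ∃ c3 > (0 : ℝ), ∃ γ0 > (0 : ℝ),
    ∀ γ : ℝ, 0 < γ → γ ≤ γ0 →
    ∀ (n p : ℕ), 0 < n → n ≤ p →
    ∀ (lam : ℕ → ℝ) (Porth Sig : Matrix (Fin p) (Fin p) ℝ),
      (∀ k, 1 ≤ k → k ≤ p → 0 ≤ lam k) →
      (∀ j k, 1 ≤ j → j ≤ k → k ≤ p → lam k ≤ lam j) →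
      Porth * Porthᵀ = 1 →
      Sig = Porth * Matrix.diagonal (fun i : Fin p => lam ((i : ℕ) + 1)) * Porthᵀ →
      n ≤ Sig.rank →
    ∀ (Ω : Type) (_ : MeasurableSpace Ω) (P : Measure Ω), IsProbabilityMeasure P →
    ∀ (X : Ω → Fin n → Fin p → ℝ) (ξ : Ω → Fin n → ℝ) (βstar : Fin p → ℝ)
      (βhat : Ω → Fin p → ℝ),
      IndepFun X ξ P →
      Measure.map X P = (Measure.pi fun _ : Fin n => mvGaussian p lam Porth) →
      (∀ᵐ ω ∂P, IsMinInterp (X ω)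
        (fun i => (∑ j, X ω i j * βstar j) + ξ ω i) (βhat ω)) →
      (kstarSet p lam c0 n).Nonempty → (kstar p lam c0 n : ℝ) ≤ c * n →
      ENNReal.ofReal (1 - c1 * Real.exp (-c2 * n)) ≤
        P {ω | min (rbar p lam γ (rho p lam c0 n βstar (enorm2 (ξ ω)))
                      (enorm2 (ξ ω)) ^ 2)
                   (c3 * enorm2 (ξ ω) ^ 2 / n) ≤
               predNorm Sig (fun j => βhat ω j - βstar j) ^ 2} := by
  refine ⟨128, by norm_num, 1, one_pos, 6, by norm_num, 1, one_pos, 1 / 2000, by norm_num,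
    1 / 2000, by norm_num, ?_⟩
  intro γ _ hγ n p hn _ lam Porth Sig hlam hanti horth hSig _ Ω _ P _ X ξ βstar βhat _ hX hβhat
    hne _
  rw [neg_one_mul]
  exact stmt9_general le_rfl (by linarith) hn hlam hanti horth hSig hX hβhat hne
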